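/- Orthogonality of even primitive characters: Let R ∈ ℳ and A, B ∈ 𝒜. Then Σ*_{χ mod R, χ even} χ(A) \overline{χ}(B) equals (1/(q−1)) Σ_{a ∈ 𝔽_q^*} Σ_{E,F ∈ ℳ, EF = R, F | (A − aB)} μ(E) φ(F) if gcd(AB, R) = 1, and equals 0 otherwise. -/

import Mathlib

open scoped BigOperators
open Filter

noncomputable section

namespace FFEH

variable {Fq : Type} [Field Fq] [Fintype Fq]

open Classical in
/-- The absolute value `|A| = q ^ deg A` of a polynomial `A ∈ 𝔽_q[T]`, with `|0| = 0`. -/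
def absP (A : Polynomial Fq) : ℝ :=
  if A = 0 then 0 else (Fintype.card Fq : ℝ) ^ A.natDegree

/-- Monic irreducible ("prime") polynomials. -/
def IsMonicPrime (P : Polynomial Fq) : Prop := P.Monic ∧ Irreducible P

/-- A Dirichlet character of modulus `R` on `𝔽_q[T]`. -/
structure IsDirichletChar (R : Polynomial Fq) (χ : Polynomial Fq → ℂ) : Prop where
  map_one' : χ 1 = 1
  map_mul' : ∀ A B : Polynomial Fq, χ (A * B) = χ A * χ B
  congr' : ∀ A B : Polynomial Fq, R ∣ A - B → χ A = χ B
  eq_zero_iff' : ∀ A : Polynomial Fq, χ A = 0 ↔ ¬ IsCoprime A R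

/-- A primitive Dirichlet character of modulus `R`: one induced by no character of
modulus of strictly smaller degree. -/
def IsPrimitiveChar (R : Polynomial Fq) (χ : Polynomial Fq → ℂ) : Prop :=
  IsDirichletChar R χ ∧
    ∀ S : Polynomial Fq, S.Monic → S ∣ R → S.natDegree < R.natDegree →
      ¬ ∃ χ₁ : Polynomial Fq → ℂ, IsDirichletChar S χ₁ ∧
        ∀ A : Polynomial Fq, IsCoprime A R → χ A = χ₁ A

/-- An even character: trivial on the nonzero constants. -/
def IsEvenChar (χ : Polynomial Fq → ℂ) : Prop :=
  ∀ a : Fq, a ≠ 0 → χ (Polynomial.C a) = 1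

/-- `φ*(R)`: the number of primitive characters of modulus `R`. -/
def numPrimChars (R : Polynomial Fq) : ℕ :=
  Set.ncard {χ : Polynomial Fq → ℂ | IsPrimitiveChar R χ}

/-- The Euler totient `φ(R) = #(𝔽_q[T]/(R))ˣ`. -/
def phiP (R : Polynomial Fq) : ℕ :=
  Nat.card ((Polynomial Fq ⧸ Ideal.span {R})ˣ)

/-- `ω(A)`: the number of distinct monic prime divisors of `A`. -/
def omegaP (A : Polynomial Fq) : ℕ :=
  Set.ncard {P : Polynomial Fq | IsMonicPrime P ∧ P ∣ A}

open Classical in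
/-- The Möbius function on monic polynomials. -/
def muP (A : Polynomial Fq) : ℤ :=
  if Squarefree A then (-1) ^ omegaP A else 0

/-- `d_k(A)`: the number of ways of writing `A` as an ordered product of `k` monic
polynomials. -/
def dk (k : ℕ) (A : Polynomial Fq) : ℕ :=
  Set.ncard {v : Fin k → Polynomial Fq | (∀ i, (v i).Monic) ∧ ∏ i, v i = A}

/-- `A ∈ 𝒮_ℳ(X)`: `A` is monic and all its prime divisors have degree at most `X`. -/
def SmoothM (X : ℕ) (A : Polynomial Fq) : Prop :=
  A.Monic ∧ ∀ P : Polynomial Fq, IsMonicPrime P → P ∣ A → P.natDegree ≤ X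

/-- The Dirichlet `L`-function of a non-trivial character `χ` of modulus `R`:
`L(s,χ) = ∑_{A monic, deg A < deg R} χ(A) |A|^{-s}`. -/
def Lfun (R : Polynomial Fq) (χ : Polynomial Fq → ℂ) (s : ℂ) : ℂ :=
  ∑ᶠ A ∈ {A : Polynomial Fq | A.Monic ∧ A.natDegree < R.natDegree},
    χ A * (absP A : ℂ) ^ (-s)

open Classical in
/-- The von Mangoldt function: `Λ(A) = log |P|` if `A = P^j` (`P` monic prime, `j ≥ 1`),
and `0` otherwise. -/
def LambdaP (A : Polynomial Fq) : ℝ :=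
  if h : ∃ P : Polynomial Fq, (P.Monic ∧ Irreducible P) ∧ ∃ j : ℕ, 1 ≤ j ∧ A = P ^ j
  then Real.log (absP h.choose) else 0

/-- The partial Euler product `P_X(s,χ)`. -/
def PX (X : ℕ) (χ : Polynomial Fq → ℂ) (s : ℂ) : ℂ :=
  Complex.exp (∑ᶠ A ∈ {A : Polynomial Fq | A.Monic ∧ A.natDegree ≤ X},
    χ A * (LambdaP A : ℂ) / ((absP A : ℂ) ^ s * (Real.log (absP A) : ℂ)))

/-- The `L`-function of `χ` as a polynomial in the variable `w = q^{-s}`. -/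
def LPoly (R : Polynomial Fq) (χ : Polynomial Fq → ℂ) : Polynomial ℂ :=
  ∑ n ∈ Finset.range R.natDegree,
    Polynomial.C (∑ᶠ A ∈ {A : Polynomial Fq | A.Monic ∧ A.natDegree = n}, χ A) *
      Polynomial.X ^ n

/-- The sum of `f` over the zeros of `L(s,χ)` counted with multiplicity, including
all the vertical `2π/log q`-periodic repetitions: the zeros are exactly the points
`-log w / log q + 2πim/log q` for `w` a root (with multiplicity) of the `L`-polynomial
and `m ∈ ℤ`. -/
def zeroSum (R : Polynomial Fq) (χ : Polynomial Fq → ℂ) (f : ℂ → ℂ) : ℂ :=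
  ((LPoly R χ).roots.map (fun w => ∑' m : ℤ,
    f (-Complex.log w / (Real.log (Fintype.card Fq) : ℂ) +
        2 * Real.pi * Complex.I * (m : ℂ) / (Real.log (Fintype.card Fq) : ℂ)))).sum

/-- The exponential integral `E₁(y) = ∫_{w=y}^{y+∞} e^{-w}/w dw`, along the horizontal
ray from `y` in the direction of `+1`. -/
def E1 (y : ℂ) : ℂ :=
  ∫ t : ℝ in Set.Ioi (0 : ℝ), Complex.exp (-(y + (t : ℂ))) / (y + (t : ℂ))

/-- `U(z) = ∫_0^∞ u(x) E₁(z log x) dx`. -/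
def Ufun (u : ℝ → ℝ) (z : ℂ) : ℂ :=
  ∫ x : ℝ in Set.Ioi (0 : ℝ), (u x : ℂ) * E1 (z * (Real.log x : ℂ))

/-- The Mellin transform `ũ(s) = ∫_0^∞ x^{s-1} u(x) dx`. -/
def mellinT (u : ℝ → ℝ) (s : ℂ) : ℂ :=
  ∫ x : ℝ in Set.Ioi (0 : ℝ), (x : ℂ) ^ (s - 1) * (u x : ℂ)

/-- The arithmetic-factor constant `a(k)`. -/
def aConst (Fq : Type) [Field Fq] [Fintype Fq] (k : ℕ) : ℝ :=
  ∏' P : {P : Polynomial Fq // IsMonicPrime P},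
    (1 - (absP P.1)⁻¹) ^ (k ^ 2) * ∑' m : ℕ, (dk k (P.1 ^ m) : ℝ) ^ 2 / absP (P.1 ^ m)

/-- The modified partial Euler product `P_X^*(s,χ)`. -/
def PXstar (X : ℕ) (χ : Polynomial Fq → ℂ) (s : ℂ) : ℂ :=
  (∏ᶠ P ∈ {P : Polynomial Fq | IsMonicPrime P ∧ P.natDegree ≤ X},
      (1 - χ P / (absP P : ℂ) ^ s)⁻¹) *
    ∏ᶠ P ∈ {P : Polynomial Fq | IsMonicPrime P ∧ X < 2 * P.natDegree ∧ P.natDegree ≤ X},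
      (1 + χ P ^ 2 / (2 * (absP P : ℂ) ^ (2 * s)))⁻¹

open Classical in
/-- The multiplicity of `P` in `A` (for `A ≠ 0`). -/
def multP (P A : Polynomial Fq) : ℕ :=
  if A = 0 then 0 else Nat.findGreatest (fun e => P ^ e ∣ A) A.natDegree

/-- Local coefficients of the Dirichlet series of `P_X^*(s,χ)^k`. -/
def locAlpha (k X : ℕ) (P : Polynomial Fq) (m : ℕ) : ℝ :=
  if m = 0 then 1
  else if X < P.natDegree then 0
  else if 2 * P.natDegree ≤ X then (dk k (P ^ m) : ℝ)
  else ∑ j ∈ Finset.range (m / 2 + 1),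
    (dk k (P ^ (m - 2 * j)) : ℝ) * (dk k (P ^ j) : ℝ) * (-(2 : ℝ)⁻¹) ^ j

/-- `α_k(A)`: the coefficients of the Dirichlet series `P_X^*(s,χ)^k = ∑ α_k(A)χ(A)|A|^{-s}`. -/
def alphaK (k X : ℕ) (A : Polynomial Fq) : ℝ :=
  ∏ᶠ P ∈ {P : Polynomial Fq | IsMonicPrime P ∧ P ∣ A}, locAlpha k X P (multP P A)

/-- Local coefficients of the Dirichlet series of `P_X^*(s,χ)^{-1}`. -/
def locAlphaNeg (X : ℕ) (P : Polynomial Fq) (m : ℕ) : ℝ :=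
  if m = 0 then 1
  else if X < P.natDegree then 0
  else if m = 1 then -1
  else if m = 2 then (if 2 * P.natDegree ≤ X then 0 else 2⁻¹)
  else if m = 3 then (if 2 * P.natDegree ≤ X then 0 else -2⁻¹)
  else 0

/-- The multiplicative function `α_{-1}`. -/
def alphaNeg (X : ℕ) (A : Polynomial Fq) : ℝ :=
  ∏ᶠ P ∈ {P : Polynomial Fq | IsMonicPrime P ∧ P ∣ A}, locAlphaNeg X P (multP P A)

/-- The cosine integral `Ci(y) = -∫_y^∞ cos t / t dt`. -/
def Ci (y : ℝ) : ℝ := -∫ t : ℝ in Set.Ioi y, Real.cos t / t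

open Classical in
/-- The greatest common monic divisor of two polynomials. -/
def gcdP (A B : Polynomial Fq) : Polynomial Fq :=
  Polynomial.C ((EuclideanDomain.gcd A B).leadingCoeff)⁻¹ * EuclideanDomain.gcd A B

/-- The decomposition shape of Lemma `A₁A₂A₃ = B₁B₂B₃`: all factors monic, the
coprimality conditions `gcd(V_{i,j}, V_{k,l}) = 1` for `i ≠ k` and `j ≠ l`, and the six
product equations. -/
def Decomp3 (A1 A2 A3 B1 B2 B3 G1 G2 G3 V12 V13 V21 V23 V31 V32 : Polynomial Fq) : Prop :=
  G1.Monic ∧ G2.Monic ∧ G3.Monic ∧ V12.Monic ∧ V13.Monic ∧ V21.Monic ∧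
    V23.Monic ∧ V31.Monic ∧ V32.Monic ∧
  IsCoprime V12 V21 ∧ IsCoprime V12 V23 ∧ IsCoprime V12 V31 ∧
  IsCoprime V13 V21 ∧ IsCoprime V13 V31 ∧ IsCoprime V13 V32 ∧
  IsCoprime V21 V32 ∧ IsCoprime V23 V31 ∧ IsCoprime V23 V32 ∧
  A1 = G1 * V12 * V13 ∧ B1 = G1 * V21 * V31 ∧
  A2 = G2 * V21 * V23 ∧ B2 = G2 * V12 * V32 ∧
  A3 = G3 * V31 * V32 ∧ B3 = G3 * V13 * V23

set_option linter.unusedSectionVars false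

/-- `χ` is trivial on residues `≡ 1 mod F` coprime to `R`. -/
def TrivOn (R : Polynomial Fq) (χ : Polynomial Fq → ℂ) (F : Polynomial Fq) : Prop :=
  ∀ X : Polynomial Fq, IsCoprime X R → F ∣ X - 1 → χ X = 1

lemma coprime_congr {F X Y : Polynomial Fq} (h : F ∣ X - Y) (hY : IsCoprime Y F) :
    IsCoprime X F := by
  obtain ⟨k, hk⟩ := h
  have : X = Y + F * k := by rw [← hk]; ring
  rw [this]
  exact hY.add_mul_left_left k

lemma exists_lift {F R X : Polynomial Fq} (hR : R ≠ 0) (hX : IsCoprime X F) :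
    ∃ X', F ∣ X' - X ∧ IsCoprime X' R := by
  classical
  set s := (UniqueFactorizationMonoid.normalizedFactors R).toFinset.filter (fun P => ¬ P ∣ X)
  refine ⟨X + F * ∏ P ∈ s, P, ⟨∏ P ∈ s, P, by ring⟩, ?_⟩
  refine isCoprime_of_prime_dvd (fun h => hR h.2) ?_
  intro z hz hzX hzR
  obtain ⟨P, hP, hzP⟩ := UniqueFactorizationMonoid.exists_mem_normalizedFactors_of_dvd hR
    hz.irreducible hzR
  by_cases h : z ∣ X
  · have h1 : z ∣ F * ∏ P ∈ s, P := (dvd_add_right h).1 hzX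
    rcases hz.dvd_or_dvd h1 with h2 | h2
    · exact hz.not_isUnit (hX.isUnit_of_dvd' h h2)
    · obtain ⟨Q, hQ, hzQ⟩ := (hz.dvd_finsetProd_iff _).1 h2
      simp only [s, Finset.mem_filter, Multiset.mem_toFinset] at hQ
      have hQi := UniqueFactorizationMonoid.irreducible_of_normalized_factor Q hQ.1
      have := hz.irreducible.associated_of_dvd hQi hzQ
      exact hQ.2 (this.symm.dvd.trans h)
  · have hPs : P ∈ s := by
      simp only [s, Finset.mem_filter, Multiset.mem_toFinset]
      exact ⟨hP, fun h' => h (hzP.dvd.trans h')⟩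
    have : z ∣ F * ∏ P ∈ s, P := (hzP.dvd.trans (Finset.dvd_prod_of_mem (fun P => P) hPs)).mul_left _
    exact h ((dvd_add_left this).1 hzX)

lemma exists_inv {R X : Polynomial Fq} (hX : IsCoprime X R) :
    ∃ Z, R ∣ X * Z - 1 ∧ IsCoprime Z R := by
  obtain ⟨a, b, h⟩ := hX
  exact ⟨a, ⟨-b, by linear_combination h⟩, ⟨X, b, by linear_combination h⟩⟩

lemma triv_congr {R F : Polynomial Fq} {χ : Polynomial Fq → ℂ} (hχ : IsDirichletChar R χ)
    (hF : F ∣ R) (hT : TrivOn R χ F) {X Y : Polynomial Fq} (hX : IsCoprime X R)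
    (hY : IsCoprime Y R) (h : F ∣ X - Y) : χ X = χ Y := by
  obtain ⟨Z, hZ, hZc⟩ := exists_inv hX
  have h1 : χ (X * Z) = 1 := hT _ (hX.mul_left hZc) (hF.trans hZ)
  have h2 : χ (Y * Z) = 1 := by
    refine hT _ (hY.mul_left hZc) ?_
    have : Y * Z - 1 = (X * Z - 1) - (X - Y) * Z := by ring
    rw [this]
    exact dvd_sub (hF.trans hZ) (h.mul_right _)
  have hz : χ Z ≠ 0 := fun h0 => (hχ.eq_zero_iff' Z).1 h0 hZc
  rw [hχ.map_mul'] at h1 h2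
  exact mul_right_cancel₀ hz (h1.trans h2.symm)

lemma isUnit_mk_iff {R X : Polynomial Fq} :
    IsUnit (Ideal.Quotient.mk (Ideal.span {R}) X) ↔ IsCoprime X R := by
  constructor
  · intro h
    obtain ⟨b, hb⟩ := h.exists_right_inv
    obtain ⟨Z, rfl⟩ := Ideal.Quotient.mk_surjective b
    rw [← map_mul, ← map_one (Ideal.Quotient.mk _), Ideal.Quotient.eq,
      Ideal.mem_span_singleton] at hb
    obtain ⟨k, hk⟩ := hb
    exact ⟨Z, -k, by linear_combination hk⟩
  · intro h
    obtain ⟨Z, hZ, -⟩ := exists_inv h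
    refine IsUnit.of_mul_eq_one (Ideal.Quotient.mk _ Z) ?_
    rw [← map_mul, ← map_one (Ideal.Quotient.mk _), Ideal.Quotient.eq,
      Ideal.mem_span_singleton]
    exact hZ

/-- The function on polynomials attached to a multiplicative character of the quotient. -/
def ofMC (R : Polynomial Fq) (ψ : MulChar (Polynomial Fq ⧸ Ideal.span {R}) ℂ) :
    Polynomial Fq → ℂ := fun X => ψ (Ideal.Quotient.mk _ X)

lemma ofMC_isDirichlet (R : Polynomial Fq) (ψ : MulChar (Polynomial Fq ⧸ Ideal.span {R}) ℂ) :
    IsDirichletChar R (ofMC R ψ) where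
  map_one' := by simp [ofMC]
  map_mul' := by simp [ofMC]
  congr' := fun A B h => by
    have : Ideal.Quotient.mk (Ideal.span {R}) A = Ideal.Quotient.mk (Ideal.span {R}) B := by
      rwa [Ideal.Quotient.eq, Ideal.mem_span_singleton]
    simp [ofMC, this]
  eq_zero_iff' := fun A => by
    rw [← isUnit_mk_iff]
    constructor
    · intro h hu
      exact (hu.map ψ).ne_zero h
    · intro h
      exact ψ.map_nonunit h

lemma ofMC_injective (R : Polynomial Fq) : Function.Injective (ofMC R) := by
  intro ψ ψ' h
  refine MulChar.ext' fun a => ?_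
  obtain ⟨X, rfl⟩ := Ideal.Quotient.mk_surjective a
  exact congrFun h X

lemma exists_ofMC {R : Polynomial Fq} {χ : Polynomial Fq → ℂ} (hχ : IsDirichletChar R χ) :
    ∃ ψ, ofMC R ψ = χ := by
  have key : ∀ X, χ (Ideal.Quotient.mk (Ideal.span {R}) X).out = χ X := fun X => by
    refine hχ.congr' _ _ ?_
    rw [← Ideal.mem_span_singleton, ← Ideal.Quotient.eq, Ideal.Quotient.mk_out]
  refine ⟨{ toFun := fun a => χ a.out, map_one' := ?_, map_mul' := ?_, map_nonunit' := ?_ }, ?_⟩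
  · rw [← map_one (Ideal.Quotient.mk _), key, hχ.map_one']
  · intro a b
    obtain ⟨X, rfl⟩ := Ideal.Quotient.mk_surjective a
    obtain ⟨Y, rfl⟩ := Ideal.Quotient.mk_surjective b
    simp only [← map_mul, key, hχ.map_mul']
  · intro a ha
    obtain ⟨X, rfl⟩ := Ideal.Quotient.mk_surjective a
    rw [isUnit_mk_iff] at ha
    simp only [key]
    exact (hχ.eq_zero_iff' X).2 ha
  · funext X
    exact key X

lemma range_ofMC (R : Polynomial Fq) : Set.range (ofMC R) = {χ | IsDirichletChar R χ} := by
  ext χ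
  exact ⟨fun ⟨ψ, h⟩ => h ▸ ofMC_isDirichlet R ψ, fun h => exists_ofMC h⟩

lemma finite_quot {R : Polynomial Fq} (hR : R.Monic) :
    Finite (Polynomial Fq ⧸ Ideal.span {R}) := by
  have := hR.finite_quotient
  exact Module.finite_of_finite Fq

lemma finite_chars {R : Polynomial Fq} (hR : R.Monic) :
    {χ : Polynomial Fq → ℂ | IsDirichletChar R χ}.Finite := by
  have := finite_quot hR
  rw [← range_ofMC]
  exact Set.finite_range _

lemma orth {R : Polynomial Fq} (hR : R.Monic) {X Y : Polynomial Fq}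
    (hX : IsCoprime X R) (hY : IsCoprime Y R) :
    ∑ᶠ χ ∈ {χ : Polynomial Fq → ℂ | IsDirichletChar R χ}, χ X * (starRingEnd ℂ) (χ Y) =
      open Classical in if R ∣ X - Y then (phiP R : ℂ) else 0 := by
  classical
  have := finite_quot hR
  have : Fintype (MulChar (Polynomial Fq ⧸ Ideal.span {R}) ℂ) := Fintype.ofFinite _
  rw [← range_ofMC, finsum_mem_range (ofMC_injective R), finsum_eq_sum_of_fintype]
  obtain ⟨Z, hZ, hZc⟩ := exists_inv hY
  have hc : ∀ ψ : MulChar (Polynomial Fq ⧸ Ideal.span {R}) ℂ,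
      ofMC R ψ X * (starRingEnd ℂ) (ofMC R ψ Y) = ψ (Ideal.Quotient.mk _ (X * Z)) := by
    intro ψ
    have h1 : (starRingEnd ℂ) (ofMC R ψ Y) = ψ⁻¹ (Ideal.Quotient.mk _ Y) :=
      MulChar.star_apply' ψ _
    have h2 : Ideal.Quotient.mk (Ideal.span {R}) Y * Ideal.Quotient.mk (Ideal.span {R}) Z = 1 := by
      rw [← map_mul, ← map_one (Ideal.Quotient.mk _), Ideal.Quotient.eq,
        Ideal.mem_span_singleton]
      exact hZ
    have h3 : Ring.inverse (Ideal.Quotient.mk (Ideal.span {R}) Y)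
        = Ideal.Quotient.mk (Ideal.span {R}) Z := by
      have := Ring.inverse_mul_cancel _ (isUnit_mk_iff.2 hY)
      calc _ = Ring.inverse (Ideal.Quotient.mk (Ideal.span {R}) Y) *
          (Ideal.Quotient.mk (Ideal.span {R}) Y * Ideal.Quotient.mk (Ideal.span {R}) Z) := by
            rw [h2, mul_one]
        _ = _ := by rw [← mul_assoc, this, one_mul]
    rw [h1, MulChar.inv_apply, h3, ofMC, ← map_mul, ← map_mul]
  simp_rw [hc]
  have hiff : Ideal.Quotient.mk (Ideal.span {R}) (X * Z) = 1 ↔ R ∣ X - Y := by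
    rw [← map_one (Ideal.Quotient.mk _), Ideal.Quotient.eq, Ideal.mem_span_singleton]
    constructor
    · intro h
      have : X - Y = (X * Z - 1) * Y - X * (Y * Z - 1) := by ring
      rw [this]
      exact dvd_sub (h.mul_right _) (hZ.mul_left _)
    · intro h
      have : X * Z - 1 = (X - Y) * Z + (Y * Z - 1) := by ring
      rw [this]
      exact dvd_add (h.mul_right _) hZ
  split_ifs with h
  · rw [hiff.2 h]
    simp only [map_one, Finset.sum_const, Finset.card_univ, nsmul_eq_mul, mul_one, phiP]
    rw [← MulChar.card_eq_card_units_of_hasEnoughRootsOfUnity (Polynomial Fq ⧸ Ideal.span {R}) ℂ,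
      Nat.card_eq_fintype_card]
  · have hne := fun h' => h (hiff.1 h')
    obtain ⟨χ, hχ⟩ := MulChar.exists_apply_ne_one_of_hasEnoughRootsOfUnity
      (Polynomial Fq ⧸ Ideal.span {R}) ℂ hne
    refine eq_zero_of_mul_eq_self_left hχ ?_
    simp only [Finset.mul_sum, ← MulChar.mul_apply]
    exact Fintype.sum_bijective _ (Group.mulLeft_bijective χ) _ _ fun χ' ↦ rfl

lemma exists_descend {R F : Polynomial Fq} {χ : Polynomial Fq → ℂ} (hR : R ≠ 0)
    (hχ : IsDirichletChar R χ) (hF : F ∣ R) (hT : TrivOn R χ F) :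
    ∃ χ₁ : Polynomial Fq → ℂ, IsDirichletChar F χ₁ ∧
        ∀ A : Polynomial Fq, IsCoprime A R → χ A = χ₁ A := by
  classical
  have hl : ∀ X : Polynomial Fq, ∃ X', IsCoprime X F → F ∣ X' - X ∧ IsCoprime X' R := by
    intro X
    by_cases h : IsCoprime X F
    · obtain ⟨X', h'⟩ := exists_lift hR h
      exact ⟨X', fun _ => h'⟩
    · exact ⟨0, fun h' => absurd h' h⟩
  choose l hl using hl
  have key : ∀ X Y, IsCoprime X F → IsCoprime Y R → F ∣ Y - X → χ (l X) = χ Y := by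
    intro X Y hX hY h
    refine triv_congr hχ hF hT (hl X hX).2 hY ?_
    have : l X - Y = (l X - X) - (Y - X) := by ring
    rw [this]
    exact dvd_sub (hl X hX).1 h
  refine ⟨fun X => if IsCoprime X F then χ (l X) else 0, ⟨?_, ?_, ?_, ?_⟩, ?_⟩
  · simp only [isCoprime_one_left, if_true]
    rw [key 1 1 isCoprime_one_left isCoprime_one_left (by simp), hχ.map_one']
  · intro A B
    simp only [IsCoprime.mul_left_iff]
    by_cases hA : IsCoprime A F
    · by_cases hB : IsCoprime B F
      · simp only [hA, hB, and_self, if_true]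
        rw [← hχ.map_mul']
        refine key _ _ (hA.mul_left hB) ((hl A hA).2.mul_left (hl B hB).2) ?_
        have : l A * l B - A * B = (l A - A) * l B + A * (l B - B) := by ring
        rw [this]
        exact dvd_add ((hl A hA).1.mul_right _) ((hl B hB).1.mul_left _)
      · simp [hB]
    · simp [hA]
  · intro A B h
    by_cases hB : IsCoprime B F
    · have hA := coprime_congr h hB
      simp only [hA, hB, if_true]
      refine key _ _ hA (hl B hB).2 ?_
      have : l B - A = (l B - B) - (A - B) := by ring
      rw [this]
      exact dvd_sub (hl B hB).1 h
    · have hA : ¬ IsCoprime A F := fun hA => hB (coprime_congr (dvd_sub_comm.1 h) hA)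
      simp [hA, hB]
  · intro A
    by_cases hA : IsCoprime A F
    · simp only [hA, if_true, not_true, iff_false]
      exact fun h0 => (hχ.eq_zero_iff' _).1 h0 (hl A hA).2
    · simp [hA]
  · intro A hA
    have hA' : IsCoprime A F := hA.of_isCoprime_of_dvd_right hF
    simp only [hA', if_true]
    exact (key A A hA' hA (by simp)).symm

lemma triv_of_induced {R F : Polynomial Fq} {χ χ₁ : Polynomial Fq → ℂ}
    (h₁ : IsDirichletChar F χ₁) (h : ∀ A : Polynomial Fq, IsCoprime A R → χ A = χ₁ A) :
    TrivOn R χ F := fun X hX hF => by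
  rw [h X hX, h₁.congr' X 1 hF, h₁.map_one']

lemma orth_triv {R F : Polynomial Fq} (hR : R.Monic) (hFm : F.Monic) (hF : F ∣ R)
    {X Y : Polynomial Fq} (hX : IsCoprime X R) (hY : IsCoprime Y R) :
    ∑ᶠ χ ∈ {χ : Polynomial Fq → ℂ | IsDirichletChar R χ ∧ TrivOn R χ F},
      χ X * (starRingEnd ℂ) (χ Y) =
      open Classical in if F ∣ X - Y then (phiP F : ℂ) else 0 := by
  classical
  rw [← orth hFm (hX.of_isCoprime_of_dvd_right hF) (hY.of_isCoprime_of_dvd_right hF)]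
  symm
  refine finsum_mem_eq_of_bijOn (fun ψ A => if IsCoprime A R then ψ A else 0) ⟨?_, ?_, ?_⟩ ?_
  · intro ψ hψ
    have hψ : IsDirichletChar F ψ := hψ
    refine ⟨⟨?_, ?_, ?_, ?_⟩, ?_⟩
    · simp [isCoprime_one_left, hψ.map_one']
    · intro A B
      simp only [IsCoprime.mul_left_iff, hψ.map_mul']
      by_cases hA : IsCoprime A R <;> by_cases hB : IsCoprime B R <;> simp [hA, hB]
    · intro A B h
      have h1 : IsCoprime A R ↔ IsCoprime B R :=
        ⟨coprime_congr (dvd_sub_comm.1 h), coprime_congr h⟩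
      simp only [h1, hψ.congr' A B (hF.trans h)]
    · intro A
      by_cases hA : IsCoprime A R
      · simp only [hA, if_true, not_true, iff_false]
        exact fun h0 => (hψ.eq_zero_iff' _).1 h0 (hA.of_isCoprime_of_dvd_right hF)
      · simp [hA]
    · exact triv_of_induced hψ (fun A hA => by simp [hA])
  · intro ψ hψ ψ' hψ' h
    have hψ : IsDirichletChar F ψ := hψ
    have hψ' : IsDirichletChar F ψ' := hψ'
    funext A
    by_cases hA : IsCoprime A F
    · obtain ⟨A', h1, h2⟩ := exists_lift hR.ne_zero hA
      have := congrFun h A'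
      simp only [h2, if_true] at this
      rw [← hψ.congr' _ _ h1, ← hψ'.congr' _ _ h1, this]
    · rw [(hψ.eq_zero_iff' A).2 hA, (hψ'.eq_zero_iff' A).2 hA]
  · rintro χ ⟨hχ, hT⟩
    obtain ⟨χ₁, h1, h2⟩ := exists_descend hR.ne_zero hχ hF hT
    refine ⟨χ₁, h1, ?_⟩
    funext A
    by_cases hA : IsCoprime A R
    · simp [hA, h2 A hA]
    · simp [hA, (hχ.eq_zero_iff' A).2 hA]
  · intro ψ hψ
    simp [hX, hY]

lemma triv_mono {R F F' : Polynomial Fq} {χ : Polynomial Fq → ℂ} (h : F ∣ F')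
    (hT : TrivOn R χ F) : TrivOn R χ F' := fun X hX hF => hT X hX (h.trans hF)

lemma triv_combine {R F E₁ E₂ : Polynomial Fq} {χ : Polynomial Fq → ℂ}
    (hχ : IsDirichletChar R χ) (hR : E₁ * E₂ * F = R) (hE : IsCoprime E₁ E₂)
    (h₁ : TrivOn R χ (E₁ * F)) (h₂ : TrivOn R χ (E₂ * F)) : TrivOn R χ F := by
  intro X hX hF
  obtain ⟨Y, hY⟩ := hF
  obtain ⟨u, v, huv⟩ := hE
  have hXE : IsCoprime X E₂ := by
    refine hX.of_isCoprime_of_dvd_right ⟨E₁ * F, ?_⟩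
    rw [← hR]; ring
  have hd1 : E₁ * F ∣ (1 + F * E₁ * u * Y) - 1 := ⟨u * Y, by ring⟩
  have hd2 : E₂ * F ∣ X - (1 + F * E₁ * u * Y) :=
    ⟨v * Y, by linear_combination hY - F * Y * huv⟩
  have hc : IsCoprime (1 + F * E₁ * u * Y) R := by
    rw [← hR, show E₁ * E₂ * F = (E₁ * F) * E₂ by ring]
    refine IsCoprime.mul_right (coprime_congr hd1 isCoprime_one_left) ?_
    exact coprime_congr (dvd_sub_comm.1 ((dvd_mul_right E₂ F).trans hd2)) hXE
  rw [triv_congr hχ ⟨E₁, by rw [← hR]; ring⟩ h₂ hX hc hd2]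
  exact h₁ _ hc hd1

lemma triv_self {R : Polynomial Fq} {χ : Polynomial Fq → ℂ}
    (hχ : IsDirichletChar R χ) : TrivOn R χ R := fun X _ h => by
  rw [hχ.congr' X 1 h, hχ.map_one']

lemma monicPrime_coprime {P Q : Polynomial Fq} (hP : IsMonicPrime P) (hQ : IsMonicPrime Q)
    (h : P ≠ Q) : IsCoprime P Q := by
  rw [hP.2.coprime_iff_not_dvd]
  intro hd
  exact h (Polynomial.eq_of_monic_of_associated hP.1 hQ.1 (hP.2.associated_of_dvd hQ.2 hd))

lemma triv_prod {R : Polynomial Fq} {χ : Polynomial Fq → ℂ} (hχ : IsDirichletChar R χ)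
    (S : Finset (Polynomial Fq)) :
    ∀ F, (∏ P ∈ S, P) * F = R → (∀ P ∈ S, IsMonicPrime P) →
      (∀ P ∈ S, ∃ F', P * F' = R ∧ TrivOn R χ F') → TrivOn R χ F := by
  classical
  induction S using Finset.induction_on with
  | empty =>
    intro F hF _ _
    simp only [Finset.prod_empty, one_mul] at hF
    rw [hF]
    exact triv_self hχ
  | insert P S hPS ih =>
    intro F hF hm hT
    rw [Finset.prod_insert hPS] at hF
    have h1 : TrivOn R χ (P * F) := by
      refine ih (P * F) (by rw [← hF]; ring) (fun Q hQ => hm Q (Finset.mem_insert_of_mem hQ))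
        (fun Q hQ => hT Q (Finset.mem_insert_of_mem hQ))
    obtain ⟨F', hF', hT'⟩ := hT P (Finset.mem_insert_self _ _)
    have hP := hm P (Finset.mem_insert_self _ _)
    have : F' = (∏ P ∈ S, P) * F := by
      apply mul_left_cancel₀ hP.1.ne_zero
      rw [hF', ← hF]; ring
    rw [this] at hT'
    refine triv_combine hχ hF ?_ h1 hT'
    refine IsCoprime.prod_right fun Q hQ => ?_
    refine monicPrime_coprime hP (hm Q (Finset.mem_insert_of_mem hQ)) ?_
    rintro rfl
    exact hPS hQ

open UniqueFactorizationMonoid in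
lemma mem_pf {R P : Polynomial Fq} (hR : R ≠ 0) :
    (open Classical in P ∈ (normalizedFactors R).toFinset) ↔ IsMonicPrime P ∧ P ∣ R := by
  classical
  rw [Multiset.mem_toFinset, mem_normalizedFactors_iff' hR]
  constructor
  · rintro ⟨h1, h2, h3⟩
    exact ⟨⟨(Polynomial.normalize_eq_self_iff_monic h1.ne_zero).1 h2, h1⟩, h3⟩
  · rintro ⟨⟨h1, h2⟩, h3⟩
    exact ⟨h2, h1.normalize_eq_self, h3⟩

open UniqueFactorizationMonoid in
lemma prod_pf {E : Polynomial Fq} (hE : E.Monic) (hs : Squarefree E) :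
    (open Classical in ∏ P ∈ (normalizedFactors E).toFinset, P) = E := by
  classical
  have hn := (squarefree_iff_nodup_normalizedFactors hE.ne_zero).1 hs
  rw [Finset.prod_eq_multiset_prod, Multiset.toFinset_val, hn.dedup, Multiset.map_id',
    prod_normalizedFactors_eq hE.ne_zero, hE.normalize_eq_self]

lemma dvd_prod_iff {S : Finset (Polynomial Fq)} (hS : ∀ P ∈ S, IsMonicPrime P)
    {P : Polynomial Fq} (hP : IsMonicPrime P) : P ∣ ∏ Q ∈ S, Q ↔ P ∈ S := by
  constructor
  · intro h
    obtain ⟨Q, hQ, hd⟩ := (hP.2.prime.dvd_finsetProd_iff _).1 h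
    have : P = Q := by
      by_contra hne
      exact hP.2.not_isUnit ((monicPrime_coprime hP (hS Q hQ) hne).isUnit_of_dvd' dvd_rfl hd)
    exact this ▸ hQ
  · intro h
    exact Finset.dvd_prod_of_mem (fun P => P) h

lemma muP_prod {S : Finset (Polynomial Fq)} (hS : ∀ P ∈ S, IsMonicPrime P) :
    muP (∏ P ∈ S, P) = (-1) ^ S.card := by
  classical
  have hsq : Squarefree (∏ P ∈ S, P) := by
    refine Finset.squarefree_prod_of_pairwise_isCoprime ?_ (fun P hP => (hS P hP).2.squarefree)
    intro P hP Q hQ hne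
    exact (monicPrime_coprime (hS P hP) (hS Q hQ) hne).isRelPrime
  have hom : omegaP (∏ P ∈ S, P) = S.card := by
    rw [omegaP, ← Set.ncard_coe_finset]
    congr 1
    ext P
    constructor
    · rintro ⟨h1, h2⟩
      exact (dvd_prod_iff hS h1).1 h2
    · intro h
      exact ⟨hS P h, (dvd_prod_iff hS (hS P h)).2 h⟩
  rw [muP, if_pos hsq, hom]

lemma primitive_iff {R : Polynomial Fq} (hR : R.Monic) {χ : Polynomial Fq → ℂ}
    (hχ : IsDirichletChar R χ) : IsPrimitiveChar R χ ↔
      ¬ ∃ P, IsMonicPrime P ∧ ∃ F, P * F = R ∧ TrivOn R χ F := by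
  constructor
  · rintro ⟨-, h⟩ ⟨P, hP, F, hF, hT⟩
    have hFm : F.Monic := Polynomial.Monic.of_mul_monic_left hP.1 (hF ▸ hR)
    refine h F hFm ⟨P, by rw [← hF]; ring⟩ ?_
      (exists_descend hR.ne_zero hχ ⟨P, by rw [← hF]; ring⟩ hT)
    rw [← hF, hP.1.natDegree_mul hFm]
    have := hP.2.natDegree_pos
    omega
  · intro h
    refine ⟨hχ, ?_⟩
    rintro S hS ⟨E, hE⟩ hdeg ⟨χ₁, h1, h2⟩
    apply h
    have hEm : E.Monic := Polynomial.Monic.of_mul_monic_left hS (hE ▸ hR)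
    have hEd : 0 < E.natDegree := by
      rw [hE, hS.natDegree_mul hEm] at hdeg
      omega
    obtain ⟨P, hPm, hPi, K, hK⟩ := Polynomial.exists_monic_irreducible_factor E
      (Polynomial.not_isUnit_of_natDegree_pos E hEd)
    refine ⟨P, ⟨hPm, hPi⟩, K * S, by rw [hE, hK]; ring, ?_⟩
    exact triv_mono (dvd_mul_left S K) (triv_of_induced h1 h2)

lemma mobius {R : Polynomial Fq} (hR : R.Monic) {χ : Polynomial Fq → ℂ}
    (hχ : IsDirichletChar R χ) :
    (open Classical in ∑ᶠ p ∈ {p : Polynomial Fq × Polynomial Fq |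
        p.1.Monic ∧ p.2.Monic ∧ p.1 * p.2 = R},
      (muP p.1 : ℂ) * (if TrivOn R χ p.2 then 1 else 0)) =
    open Classical in if IsPrimitiveChar R χ then 1 else 0 := by
  classical
  set I := (UniqueFactorizationMonoid.normalizedFactors R).toFinset.filter
    (fun P => ∃ F, P * F = R ∧ TrivOn R χ F) with hI
  have memI : ∀ P, P ∈ I ↔ IsMonicPrime P ∧ ∃ F, P * F = R ∧ TrivOn R χ F := by
    intro P
    rw [hI, Finset.mem_filter, mem_pf hR.ne_zero]
    constructor
    · rintro ⟨⟨h1, -⟩, h2⟩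
      exact ⟨h1, h2⟩
    · rintro ⟨h1, F, h2, h3⟩
      exact ⟨⟨h1, ⟨F, h2.symm⟩⟩, F, h2, h3⟩
  have hprim : IsPrimitiveChar R χ ↔ I = ∅ := by
    rw [primitive_iff hR hχ, Finset.eq_empty_iff_forall_notMem]
    simp only [memI, not_exists, not_and]
  let g : Finset (Polynomial Fq) → Polynomial Fq × Polynomial Fq :=
    fun S => (∏ P ∈ S, P, R / ∏ P ∈ S, P)
  have hSp : ∀ S ∈ I.powerset, ∀ P ∈ S, IsMonicPrime P := fun S hS P hP =>
    ((memI P).1 (Finset.mem_powerset.1 hS hP)).1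
  have hgm : ∀ S ∈ I.powerset, (∏ P ∈ S, P).Monic := fun S hS =>
    Polynomial.monic_prod_of_monic _ _ fun P hP => (hSp S hS P hP).1
  have hgd : ∀ S ∈ I.powerset, (∏ P ∈ S, P) * (R / ∏ P ∈ S, P) = R := by
    intro S hS
    refine EuclideanDomain.mul_div_cancel' (hgm S hS).ne_zero ?_
    refine Finset.prod_dvd_of_coprime ?_ ?_
    · intro P hP Q hQ hne
      exact monicPrime_coprime (hSp S hS P hP) (hSp S hS Q hQ) hne
    · intro P hP
      obtain ⟨-, F, hF, -⟩ := (memI P).1 (Finset.mem_powerset.1 hS hP)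
      exact ⟨F, hF.symm⟩
  have hinj : Set.InjOn g (I.powerset : Set (Finset (Polynomial Fq))) := by
    intro S hS S' hS' h
    have h1 : ∏ P ∈ S, P = ∏ P ∈ S', P := congrArg Prod.fst h
    ext P
    constructor
    · intro hP
      have hPm := hSp S hS P hP
      exact (dvd_prod_iff (hSp S' hS') hPm).1 (h1 ▸ (dvd_prod_iff (hSp S hS) hPm).2 hP)
    · intro hP
      have hPm := hSp S' hS' P hP
      exact (dvd_prod_iff (hSp S hS) hPm).1 (h1 ▸ (dvd_prod_iff (hSp S' hS') hPm).2 hP)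
  rw [finsum_mem_inter_support_eq' _ _ (g '' (I.powerset : Set (Finset (Polynomial Fq)))),
    finsum_mem_image hinj, finsum_mem_coe_finset]
  · have : ∀ S ∈ I.powerset, ((muP (g S).1 : ℂ) * (if TrivOn R χ (g S).2 then 1 else 0)) =
        (((-1) ^ S.card : ℤ) : ℂ) := by
      intro S hS
      have hT : TrivOn R χ (g S).2 := triv_prod hχ S _ (hgd S hS) (hSp S hS)
        (fun P hP => ((memI P).1 (Finset.mem_powerset.1 hS hP)).2)
      rw [if_pos hT, mul_one, show (g S).1 = ∏ P ∈ S, P from rfl, muP_prod (hSp S hS)]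
    rw [Finset.sum_congr rfl this, ← Int.cast_sum, Finset.sum_powerset_neg_one_pow_card]
    simp only [hprim]
    split_ifs <;> simp
  · rintro ⟨E, F⟩ hx
    have hx1 : muP E ≠ 0 ∧ TrivOn R χ F := by
      simpa [and_comm] using hx
    constructor
    · rintro ⟨h1, h2, h3⟩
      simp only at h1 h2 h3
      have hsq : Squarefree E := by
        by_contra hn
        exact hx1.1 (by rw [muP, if_neg hn])
      have hp := prod_pf h1 hsq
      refine ⟨(UniqueFactorizationMonoid.normalizedFactors E).toFinset, ?_, ?_⟩
      · rw [Finset.mem_coe, Finset.mem_powerset]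
        intro P hP
        obtain ⟨hPm, K, hK⟩ := (mem_pf h1.ne_zero).1 hP
        refine (memI P).2 ⟨hPm, K * F, by rw [← h3, hK]; ring, ?_⟩
        exact triv_mono (dvd_mul_left F K) hx1.2
      · simp only [g]
        rw [hp, ← h3, mul_div_cancel_left₀ _ h1.ne_zero]
    · rintro ⟨S, hS, h⟩
      rw [← h]
      refine ⟨hgm S hS, ?_, hgd S hS⟩
      refine Polynomial.Monic.of_mul_monic_left (hgm S hS) ?_
      rw [hgd S hS]
      exact hR

lemma finite_pairs {R : Polynomial Fq} (hR : R.Monic) :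
    {p : Polynomial Fq × Polynomial Fq | p.1.Monic ∧ p.2.Monic ∧ p.1 * p.2 = R}.Finite := by
  have hfin : {E : Polynomial Fq | E.degree < (R.natDegree + 1 : ℕ)}.Finite := by
    have : Finite (Polynomial.degreeLT Fq (R.natDegree + 1)) :=
      Module.finite_of_finite Fq
    refine (Set.toFinite (Polynomial.degreeLT Fq (R.natDegree + 1) : Set (Polynomial Fq))).subset ?_
    intro E hE
    exact Polynomial.mem_degreeLT.2 hE
  refine (hfin.prod hfin).subset ?_
  rintro ⟨E, F⟩ ⟨h1, h2, h3⟩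
  simp only at h1 h2 h3
  have hd : R.natDegree = E.natDegree + F.natDegree := by
    rw [← h3, h1.natDegree_mul h2]
  constructor
  · refine lt_of_le_of_lt Polynomial.degree_le_natDegree ?_
    exact_mod_cast (by omega : E.natDegree < R.natDegree + 1)
  · refine lt_of_le_of_lt Polynomial.degree_le_natDegree ?_
    exact_mod_cast (by omega : F.natDegree < R.natDegree + 1)

lemma even_avg {R : Polynomial Fq} {χ : Polynomial Fq → ℂ} (hχ : IsDirichletChar R χ) :
    (open Classical in if IsEvenChar χ then (1 : ℂ) else 0) =
      ((Fintype.card Fq : ℂ) - 1)⁻¹ *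
        ∑ᶠ a ∈ {a : Fq | a ≠ 0}, (starRingEnd ℂ) (χ (Polynomial.C a)) := by
  classical
  let f : Fqˣ →* ℂ :=
    { toFun := fun a => (starRingEnd ℂ) (χ (Polynomial.C (a : Fq)))
      map_one' := by simp [hχ.map_one']
      map_mul' := fun a b => by simp [hχ.map_mul'] }
  have hf : f = 1 ↔ IsEvenChar χ := by
    constructor
    · intro h a ha
      have := DFunLike.congr_fun h (Units.mk0 a ha)
      have h2 : (starRingEnd ℂ) (χ (Polynomial.C a)) = 1 := this
      have := congrArg (starRingEnd ℂ) h2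
      simpa using this
    · intro h
      ext a
      change (starRingEnd ℂ) (χ (Polynomial.C (a : Fq))) = 1
      rw [h a a.ne_zero, map_one]
  have hs : ∑ᶠ a ∈ {a : Fq | a ≠ 0}, (starRingEnd ℂ) (χ (Polynomial.C a)) = ∑ a : Fqˣ, f a := by
    have hr : {a : Fq | a ≠ 0} = Set.range (fun a : Fqˣ => (a : Fq)) := by
      ext a
      exact ⟨fun h => ⟨Units.mk0 a h, rfl⟩, fun ⟨u, h⟩ => h ▸ u.ne_zero⟩
    rw [hr, finsum_mem_range Units.val_injective, finsum_eq_sum_of_fintype]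
    rfl
  rw [hs, sum_hom_units]
  have hq : 1 < Fintype.card Fq := Fintype.one_lt_card
  have hq0 : (Fintype.card Fq : ℂ) - 1 ≠ 0 := by
    rw [sub_ne_zero]
    exact_mod_cast hq.ne'
  simp only [hf]
  split_ifs
  · rw [Fintype.card_units, Nat.cast_sub hq.le, Nat.cast_one, inv_mul_cancel₀ hq0]
  · simp

/-- **Orthogonality of even primitive characters.**
`∑*_{χ mod R, χ even} χ(A) conj(χ(B))` equals
`(1/(q-1)) ∑_{a ∈ 𝔽_q^*} ∑_{EF = R, F ∣ A - aB} μ(E) φ(F)` when `gcd(AB,R) = 1`,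
and `0` otherwise. -/
theorem even_primitive_character_orthogonality
    (Fq : Type) [Field Fq] [Fintype Fq]
    (R : Polynomial Fq) (hR : R.Monic) (A B : Polynomial Fq) :
    (IsCoprime (A * B) R →
      (∑ᶠ χ ∈ {χ : Polynomial Fq → ℂ | IsPrimitiveChar R χ ∧ IsEvenChar χ},
          χ A * (starRingEnd ℂ) (χ B)) =
        ((Fintype.card Fq : ℂ) - 1)⁻¹ *
          ∑ᶠ a ∈ {a : Fq | a ≠ 0},
            ∑ᶠ p ∈ {p : Polynomial Fq × Polynomial Fq |
                p.1.Monic ∧ p.2.Monic ∧ p.1 * p.2 = R ∧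
                p.2 ∣ A - Polynomial.C a * B},
              (muP p.1 : ℂ) * (phiP p.2 : ℂ)) ∧
    (¬ IsCoprime (A * B) R →
      (∑ᶠ χ ∈ {χ : Polynomial Fq → ℂ | IsPrimitiveChar R χ ∧ IsEvenChar χ},
          χ A * (starRingEnd ℂ) (χ B)) = 0) := by
  classical
  have hDfin := finite_chars hR
  constructor
  · intro hAB
    obtain ⟨hA, hB⟩ := IsCoprime.mul_left_iff.1 hAB
    have hPfin := finite_pairs hR
    set D := hDfin.toFinset with hD
    set Q := hPfin.toFinset with hQ
    have hCfin : {a : Fq | a ≠ 0}.Finite := Set.toFinite _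
    set U := hCfin.toFinset with hU
    have memD : ∀ χ, χ ∈ D ↔ IsDirichletChar R χ := fun χ => by simp [hD]
    have memQ : ∀ p, p ∈ Q ↔ p.1.Monic ∧ p.2.Monic ∧ p.1 * p.2 = R := fun p => by simp [hQ]
    have memU : ∀ a, a ∈ U ↔ a ≠ 0 := fun a => by simp [hU]
    -- left side as a finite sum with indicator functions
    have hL : (∑ᶠ χ ∈ {χ : Polynomial Fq → ℂ | IsPrimitiveChar R χ ∧ IsEvenChar χ},
          χ A * (starRingEnd ℂ) (χ B)) =
        ∑ χ ∈ D, (if IsPrimitiveChar R χ then (1 : ℂ) else 0) *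
          ((if IsEvenChar χ then (1 : ℂ) else 0) * (χ A * (starRingEnd ℂ) (χ B))) := by
      have : {χ : Polynomial Fq → ℂ | IsPrimitiveChar R χ ∧ IsEvenChar χ} =
          ((D.filter (fun χ => IsPrimitiveChar R χ ∧ IsEvenChar χ) :
            Finset (Polynomial Fq → ℂ)) : Set (Polynomial Fq → ℂ)) := by
        ext χ
        simp only [Set.mem_ofPred_eq, Finset.coe_filter, memD]
        exact ⟨fun h => ⟨h.1.1, h⟩, fun h => h.2⟩
      rw [this, finsum_mem_coe_finset, Finset.sum_filter]
      refine Finset.sum_congr rfl fun χ _ => ?_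
      by_cases h1 : IsPrimitiveChar R χ <;> by_cases h2 : IsEvenChar χ <;> simp [h1, h2]
    have hinner : ∀ a ∈ U, (∑ᶠ p ∈ {p : Polynomial Fq × Polynomial Fq |
                p.1.Monic ∧ p.2.Monic ∧ p.1 * p.2 = R ∧
                p.2 ∣ A - Polynomial.C a * B},
              (muP p.1 : ℂ) * (phiP p.2 : ℂ)) =
        ∑ p ∈ Q, (muP p.1 : ℂ) * ∑ χ ∈ D, (if TrivOn R χ p.2 then (1 : ℂ) else 0) *
          (χ A * (starRingEnd ℂ) (χ (Polynomial.C a * B))) := by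
      intro a ha
      have : {p : Polynomial Fq × Polynomial Fq |
                p.1.Monic ∧ p.2.Monic ∧ p.1 * p.2 = R ∧ p.2 ∣ A - Polynomial.C a * B} =
          ((Q.filter (fun p => p.2 ∣ A - Polynomial.C a * B) :
            Finset (Polynomial Fq × Polynomial Fq)) : Set (Polynomial Fq × Polynomial Fq)) := by
        ext p
        simp only [Set.mem_ofPred_eq, Finset.coe_filter, memQ, and_assoc]
      rw [this, finsum_mem_coe_finset, Finset.sum_filter]
      refine Finset.sum_congr rfl fun p hp => ?_
      obtain ⟨h1, h2, h3⟩ := (memQ p).1 hp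
      have haB : IsCoprime (Polynomial.C a * B) R := by
        refine IsCoprime.mul_left ?_ hB
        exact ⟨Polynomial.C a⁻¹, 0, by
          rw [← Polynomial.C_mul, inv_mul_cancel₀ ((memU a).1 ha)]; simp⟩
      have ho := orth_triv hR h2 ⟨p.1, by rw [← h3]; ring⟩ hA haB
      have hset : {χ : Polynomial Fq → ℂ | IsDirichletChar R χ ∧ TrivOn R χ p.2} =
          ((D.filter (fun χ => TrivOn R χ p.2) :
            Finset (Polynomial Fq → ℂ)) : Set (Polynomial Fq → ℂ)) := by
        ext χ
        simp only [Set.mem_ofPred_eq, Finset.coe_filter, memD]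
      rw [hset, finsum_mem_coe_finset, Finset.sum_filter] at ho
      have hs : (∑ χ ∈ D, (if TrivOn R χ p.2 then (1 : ℂ) else 0) *
          (χ A * (starRingEnd ℂ) (χ (Polynomial.C a * B)))) =
          if p.2 ∣ A - Polynomial.C a * B then (phiP p.2 : ℂ) else 0 := by
        rw [← ho]
        refine Finset.sum_congr rfl fun χ _ => ?_
        split_ifs <;> simp
      rw [hs]
      split_ifs <;> simp
    rw [hL, finsum_mem_eq_finite_toFinset_sum _ hCfin, Finset.sum_congr rfl hinner]
    have hterm : ∀ χ ∈ D, (if IsPrimitiveChar R χ then (1 : ℂ) else 0) *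
          ((if IsEvenChar χ then (1 : ℂ) else 0) * (χ A * (starRingEnd ℂ) (χ B))) =
        ∑ a ∈ U, ∑ p ∈ Q, ((Fintype.card Fq : ℂ) - 1)⁻¹ * ((muP p.1 : ℂ) *
          ((if TrivOn R χ p.2 then (1 : ℂ) else 0) *
            (χ A * (starRingEnd ℂ) (χ (Polynomial.C a * B))))) := by
      intro χ hχ
      have hχ' := (memD χ).1 hχ
      rw [← mobius hR hχ', even_avg hχ', finsum_mem_eq_finite_toFinset_sum _ hPfin,
        finsum_mem_eq_finite_toFinset_sum _ hCfin, ← hU, ← hQ, Finset.sum_mul,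
        Finset.sum_comm (s := U)]
      refine Finset.sum_congr rfl fun p _ => ?_
      rw [Finset.mul_sum, Finset.sum_mul, Finset.mul_sum]
      refine Finset.sum_congr rfl fun a _ => ?_
      rw [hχ'.map_mul', map_mul]
      ring
    rw [Finset.sum_congr rfl hterm, Finset.mul_sum, Finset.sum_comm]
    refine Finset.sum_congr rfl fun a _ => ?_
    rw [Finset.mul_sum, Finset.sum_comm]
    refine Finset.sum_congr rfl fun p _ => ?_
    rw [Finset.mul_sum, Finset.mul_sum]
  · intro hAB
    refine finsum_mem_eq_zero_of_forall_eq_zero ?_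
    rintro χ ⟨⟨hχ, -⟩, -⟩
    have h0 := (hχ.eq_zero_iff' (A * B)).2 hAB
    rw [hχ.map_mul'] at h0
    rcases mul_eq_zero.1 h0 with h | h <;> simp [h]

end FFEH
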